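/- arXiv:1806.09051 — 9 statements merged into one kernel-verified Lean document; each statement's English description precedes it below -/
import Mathlib

section
/- Let V and E be finite sets and s, t : E → V the source and target maps of a finite directed graph G (parallel edges allowed). Assume G is strongly connected, i.e., for any two vertices u, w there is a directed path in G from u to w. Let F_G denote the set of edges e ∈ E such that e is the unique edge of G with target t(e). If the subgraph (V, F_G) contains a directed cycle (a nonempty directed closed path all of whose edges lie in F_G), then F_G = E and G is itself a directed cycle; in particular every vertex of G is the target of exactly one edge and the source of exactly one edge. -/
/-- A permutation of a finite type all of whose points lie on the orbit of `a` is conjugate to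
the successor map of some `ZMod m` with `0 < m`. -/
theorem Equiv.Perm.exists_zmod_equiv_of_forall_zpow {α : Type*} [Finite α] (σ : Equiv.Perm α)
    (a : α) (h : ∀ x, ∃ k : ℤ, (σ ^ k) a = x) :
    ∃ (m : ℕ) (_ : 0 < m) (c : ZMod m ≃ α), ∀ i, c (i + 1) = σ (c i) := by
  have hmem : ∀ x, x ∈ MulAction.orbit (Subgroup.zpowers σ) a := fun x => by
    obtain ⟨k, rfl⟩ := h x
    exact ⟨⟨σ ^ k, k, rfl⟩, rfl⟩
  let c : ZMod (Function.minimalPeriod (σ • ·) a) ≃ α :=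
    (MulAction.orbitZPowersEquiv σ a).symm.trans (Equiv.subtypeUnivEquiv hmem)
  have hc : ∀ k : ℤ, c k = (σ ^ k) a := fun k => by
    simp only [c, Equiv.trans_apply, MulAction.orbitZPowersEquiv_symm_apply']
    rfl
  refine ⟨_, Function.minimalPeriod_pos_of_mem_periodicPts
    ((MulAction.injective σ).mem_periodicPts a), c, fun i => ?_⟩
  obtain ⟨k, rfl⟩ := ZMod.intCast_surjective i
  rw [← Int.cast_one, ← Int.cast_add, hc, hc, add_comm, zpow_add, zpow_one, Equiv.Perm.mul_apply]

/-- If every vertex reaches every other one and a closed walk `c` consists of edges that are the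
only incoming edge of their target, then `c` visits every vertex. -/
theorem target_comp_surjective_of_closed_walk {V E : Type*} {s t : E → V}
    (hconn : ∀ u w : V,
      Relation.ReflTransGen (fun x y : V => ∃ e : E, s e = x ∧ t e = y) u w)
    {n : ℕ} {c : ZMod n → E} (huniq : ∀ i e, t e = t (c i) → e = c i)
    (hwalk : ∀ i, t (c i) = s (c (i + 1))) :
    Function.Surjective (t ∘ c) := by
  intro v
  induction hconn v (t (c 0)) using Relation.ReflTransGen.head_induction_on with
  | refl => exact ⟨0, rfl⟩
  | head hstep _ ih =>
    obtain ⟨e, rfl, rfl⟩ := hstep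
    obtain ⟨i, hi⟩ := ih
    obtain rfl := huniq i e hi.symm
    exact ⟨i - 1, by simp [hwalk]⟩

/-- For a strongly connected finite directed graph `G` (vertex set `V`,
edge set `E`, source and target maps `s, t`), if the subgraph on the set `F_G` of
edges that are the unique incoming edge of their target contains a directed cycle,
then `F_G = E` and `G` is itself a directed cycle; in particular every vertex is
the target of exactly one edge and the source of exactly one edge. -/
theorem stmt0 {V E : Type*} [Fintype V] [Fintype E]
    (s t : E → V)
    (hconn : ∀ u w : V,
      Relation.ReflTransGen (fun x y : V => ∃ e : E, s e = x ∧ t e = y) u w)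
    (FG : Set E) (hFG : FG = {e : E | ∀ e' : E, t e' = t e → e' = e})
    (hcycle : ∃ (n : ℕ) (_ : 0 < n) (c : ZMod n → E),
      (∀ i, c i ∈ FG) ∧ ∀ i, t (c i) = s (c (i + 1))) :
    FG = Set.univ ∧
    (∃ (n : ℕ) (_ : 0 < n) (c : ZMod n ≃ E) (w : ZMod n ≃ V),
      ∀ i, s (c i) = w i ∧ t (c i) = w (i + 1)) ∧
    (∀ v : V, ∃! e : E, t e = v) ∧ (∀ v : V, ∃! e : E, s e = v) := by
  subst hFG
  obtain ⟨n, hn, c, huniq, hwalk⟩ := hcycle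
  have : NeZero n := ⟨hn.ne'⟩
  have hsurj := target_comp_surjective_of_closed_walk hconn huniq hwalk
  have hcsurj : Function.Surjective c := fun e => by
    obtain ⟨i, hi⟩ := hsurj (t e)
    exact ⟨i, (huniq i e hi.symm).symm⟩
  have htinj : Function.Injective t := fun e e' h => by
    obtain ⟨i, rfl⟩ := hcsurj e'
    exact huniq i e h
  have ht : Function.Bijective t := ⟨htinj, hsurj.of_comp⟩
  have hssurj : Function.Surjective s := fun v => by
    obtain ⟨i, rfl⟩ := hsurj v
    exact ⟨c (i + 1), (hwalk i).symm⟩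
  have hs : Function.Bijective s :=
    (Fintype.bijective_iff_surjective_and_card s).2 ⟨hssurj, Fintype.card_of_bijective ht⟩
  refine ⟨Set.eq_univ_of_forall fun e e' h => htinj h, ?_, ht.existsUnique, hs.existsUnique⟩
  let σ : Equiv.Perm E := (Equiv.ofBijective t ht).trans (Equiv.ofBijective s hs).symm
  have hσ : ∀ e, s (σ e) = t e := fun e => (Equiv.ofBijective s hs).apply_symm_apply (t e)
  have hpow : ∀ k : ℕ, (σ ^ k) (c 0) = c k := fun k => by
    induction k with
    | zero => simp
    | succ k ih =>
      rw [pow_succ', Equiv.Perm.mul_apply, ih]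
      exact hs.1 (by rw [hσ, hwalk, Nat.cast_succ])
  obtain ⟨m, hm, d, hd⟩ := σ.exists_zmod_equiv_of_forall_zpow (c 0) fun e => by
    obtain ⟨i, rfl⟩ := hcsurj e
    exact ⟨i.val, by rw [zpow_natCast, hpow, ZMod.natCast_zmod_val]⟩
  refine ⟨m, hm, d, d.trans (Equiv.ofBijective s hs), fun i => ⟨rfl, ?_⟩⟩
  rw [Equiv.trans_apply, hd, Equiv.ofBijective_apply, hσ]
end

section
/- Let G be a finite directed graph with vertex set V, edge set E and source and target maps s, t : E → V. Assume G is strongly connected and that G(V, F_G) is a tree, i.e., there is a vertex V₀ such that for every vertex v there is a unique directed path from V₀ to v consisting entirely of edges of F_G; write λ(v) for the length of this path and β(v) for the sum of the out-degrees in G of the λ(v)+1 vertices lying on this path (including V₀ and v). Call a vertex a leaf of the tree if it is not the source of any edge of F_G. If there exists an edge e ∈ E ∖ F_G with β(s(e)) = λ(s(e)) + card(E ∖ F_G), then there exists an edge e⊤ ∈ E ∖ F_G with β(s(e⊤)) = λ(s(e⊤)) + card(E ∖ F_G) such that s(e⊤) is a leaf of the tree. -/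
/-- A directed walk in the graph with source map `s` and target map `t`,
from a vertex, along a list of edges, to a vertex. -/
inductive IsWalk {V E : Type*} (s t : E → V) : V → List E → V → Prop
  | nil (v : V) : IsWalk s t v [] v
  | cons {u w : V} (e : E) {p : List E} (h : s e = u) (hp : IsWalk s t (t e) p w) :
      IsWalk s t u (e :: p) w

theorem IsWalk.append_edge {V E : Type*} {s t : E → V} {u : V} {p : List E} {e : E}
    (h : IsWalk s t u p (s e)) : IsWalk s t u (p ++ [e]) (t e) := by
  generalize hw : s e = w at h
  induction h with
  | nil v => exact .cons e hw (.nil _)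
  | cons e' h' _ ih => exact .cons e' h' (ih hw)

/-- A property that is preserved along the edges of a walk passes from its start to its end. -/
theorem IsWalk.transport {V E : Type*} {s t : E → V} {P : V → Prop} {u w : V} {p : List E}
    (h : IsWalk s t u p w) (hstep : ∀ e ∈ p, P (s e) → P (t e)) (hu : P u) : P w := by
  induction h with
  | nil v => exact hu
  | cons e h _ ih =>
    exact ih (fun e' he' => hstep e' (List.mem_cons_of_mem _ he'))
      (hstep e List.mem_cons_self (h ▸ hu))

/-- If the source of an edge can be reached from `v`, then some edge leaves `v`. -/
theorem IsWalk.exists_source_eq {V E : Type*} {s t : E → V} {v : V} {p : List E} {e : E}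
    (h : IsWalk s t v p (s e)) : ∃ e', s e' = v := by
  cases h with
  | nil => exact ⟨e, rfl⟩
  | cons e' h' _ => exact ⟨e', h'⟩

/-- Lemma 4.1: Let `G` be a strongly connected finite directed graph
such that `G(V, F_G)` is a tree with root `V₀`: every vertex `v` is reached from `V₀`
by a unique directed `F_G`-path `f v`.  Write `λ v = (f v).length` and let `β v` be the
sum of the out-degrees in `G` of the vertices on this path.  If there is an edge
`e ∈ E ∖ F_G` with `β (s e) = λ (s e) + card (E ∖ F_G)`, then there is such an edge
whose source is a leaf of the tree. -/
theorem stmt1 {V E : Type*} [Fintype V] [Fintype E] [DecidableEq V] [DecidableEq E]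
    (s t : E → V)
    (hconn : ∀ u w : V, ∃ p : List E, IsWalk s t u p w)
    (FG : Finset E) (hFG : ∀ e : E, e ∈ FG ↔ ∀ e' : E, t e' = t e → e' = e)
    (V₀ : V) (f : V → List E)
    (hf : ∀ v : V, (∀ e ∈ f v, e ∈ FG) ∧ IsWalk s t V₀ (f v) v)
    (huniq : ∀ (v : V) (p : List E), (∀ e ∈ p, e ∈ FG) → IsWalk s t V₀ p v → p = f v)
    (outdeg : V → ℕ)
    (houtdeg : ∀ v : V, outdeg v = (Finset.univ.filter fun e : E => s e = v).card)
    (β : V → ℕ)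
    (hβ : ∀ v : V, β v = outdeg V₀ + ((f v).map fun e => outdeg (t e)).sum)
    (e : E) (he : e ∉ FG)
    (hbe : β (s e) = (f (s e)).length + FGᶜ.card) :
    ∃ etop : E, etop ∉ FG ∧ β (s etop) = (f (s etop)).length + FGᶜ.card ∧
      ∀ e' ∈ FG, s e' ≠ s etop := by
  have hroot : f V₀ = [] := (huniq V₀ [] (by simp) (.nil _)).symm
  have hstep : ∀ e ∈ FG, f (t e) = f (s e) ++ [e] := fun e he =>
    (huniq _ _ (by
      intro e' he'
      rcases List.mem_append.1 he' with h | h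
      · exact (hf _).1 _ h
      · rwa [List.mem_singleton.1 h]) (hf (s e)).2.append_edge).symm
  have hout : ∀ v, ∃ e', s e' = v := fun v =>
    (hconn v (s e)).elim fun _ hp => hp.exists_source_eq
  have hpos : ∀ v, 1 ≤ outdeg v := fun v => by
    obtain ⟨e', he'⟩ := hout v
    rw [houtdeg]
    exact Finset.card_pos.2 ⟨e', by simp [he']⟩
  have hnodup : ∀ v, (V₀ :: (f v).map t).Nodup ∧
      ∀ u ∈ V₀ :: (f v).map t, (f u).length ≤ (f v).length := fun v => by
    refine (hf v).2.transport (P := fun v => (V₀ :: (f v).map t).Nodup ∧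
      ∀ u ∈ V₀ :: (f v).map t, (f u).length ≤ (f v).length) ?_ (by simp [hroot])
    rintro e he ⟨hn, hl⟩
    have hfe := hstep e ((hf v).1 e he)
    have hlist : V₀ :: (f (t e)).map t = (V₀ :: (f (s e)).map t) ++ [t e] := by simp [hfe]
    have hlen : (f (t e)).length = (f (s e)).length + 1 := by simp [hfe]
    rw [hlist]
    refine ⟨List.nodup_append.2 ⟨hn, by simp, ?_⟩, ?_⟩
    · intro a ha b hb hab
      have := hl a ha
      rw [hab, List.mem_singleton.1 hb] at this
      omega
    · intro u hu
      rcases List.mem_append.1 hu with h | h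
      · have := hl u h
        omega
      · rw [List.mem_singleton.1 h]
  have hFGcard : FG.card + 1 ≤ Fintype.card V := by
    have himage : (FG.image t).card = FG.card :=
      Finset.card_image_of_injOn fun a _ b hb hab => (hFG b).1 hb a hab
    have hV₀ : V₀ ∉ FG.image t := by
      intro h
      obtain ⟨e, he, hte⟩ := Finset.mem_image.1 h
      have := hstep e he
      simp [hte, hroot] at this
    rw [← himage, ← Finset.card_insert_of_notMem hV₀]
    exact Finset.card_le_univ _
  have hsum : ∑ v, outdeg v = FG.card + FGᶜ.card := by
    rw [Finset.card_add_card_compl, ← Finset.card_univ,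
      Finset.card_eq_sum_card_fiberwise (f := s) (t := Finset.univ) (by simp)]
    exact Finset.sum_congr rfl fun v _ => houtdeg v
  -- The vertices off the root path of `v` have out-degree at least one.
  have hupper : ∀ v, β v ≤ (f v).length + FGᶜ.card := fun v => by
    set P := (V₀ :: (f v).map t).toFinset with hP
    have hPcard : P.card = (f v).length + 1 := by
      rw [hP, List.toFinset_card_of_nodup (hnodup v).1]
      simp
    have hPsum : ∑ u ∈ P, outdeg u = β v := by
      rw [hP, List.sum_toFinset _ (hnodup v).1, hβ]
      simp [Function.comp_def]
    have hsplit := Finset.sum_add_sum_compl P outdeg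
    have hcompl : Pᶜ.card ≤ ∑ u ∈ Pᶜ, outdeg u := by
      simpa using Finset.card_nsmul_le_sum Pᶜ outdeg 1 fun u _ => hpos u
    have := Finset.card_add_card_compl P
    omega
  obtain ⟨v, hv, hmax⟩ := Finset.exists_max_image
    (Finset.univ.filter fun v => β v = (f v).length + FGᶜ.card) (fun v => (f v).length)
    ⟨s e, by simpa using hbe⟩
  have hvβ : β v = (f v).length + FGᶜ.card := by simpa using hv
  have hleaf : ∀ e' ∈ FG, s e' ≠ v := by
    rintro e' he' rfl
    have hfe := hstep e' he'
    have hlen : (f (t e')).length = (f (s e')).length + 1 := by simp [hfe]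
    have hβe : β (t e') = β (s e') + outdeg (t e') := by simp [hβ, hfe, add_assoc]
    have h₁ := hpos (t e')
    have h₂ := hupper (t e')
    have h₃ := hmax (t e') (by
      simp only [Finset.mem_filter, Finset.mem_univ, true_and]
      omega)
    omega
  obtain ⟨e', rfl⟩ := hout v
  exact ⟨e', fun h => hleaf e' h rfl, hvβ, hleaf⟩
end

section
/- Let K, L, M be positive integers and set (as integers) τ = K + K·L, ν = K·L·M and I₅ = K + L + M. Then M = 1 if and only if (τ − ν)(I₅ − 1) = (τ − ν)² + ν. -/
/-- Lemma 5.7: for positive integers `K, L, M`, with `τ = K + K*L`,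
`ν = K*L*M`, `I₅ = K + L + M`, one has `M = 1` iff
`(τ - ν)*(I₅ - 1) = (τ - ν)^2 + ν`. -/
theorem stmt2 (K L M : ℤ) (hK : 0 < K) (hL : 0 < L) (hM : 0 < M)
    (τ ν I₅ : ℤ) (hτ : τ = K + K * L) (hν : ν = K * L * M) (hI₅ : I₅ = K + L + M) :
    M = 1 ↔ (τ - ν) * (I₅ - 1) = (τ - ν) ^ 2 + ν := by
  subst hτ hν hI₅
  constructor
  · rintro rfl
    ring
  · intro h
    by_contra hne
    have hM2 : 2 ≤ M := by omega
    have hLM : 0 < L * (M - 1) := mul_pos hL (by linarith)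
    have hdiff : K + K * L - K * L * M ≤ 0 := by
      have : K * (1 - L * (M - 1)) ≤ 0 :=
        mul_nonpos_of_nonneg_of_nonpos hK.le (by omega)
      linarith
    have hlhs : (K + K * L - K * L * M) * (K + L + M - 1) ≤ 0 :=
      mul_nonpos_of_nonpos_of_nonneg hdiff (by linarith)
    have hrhs : 0 < (K + K * L - K * L * M) ^ 2 + K * L * M := by positivity
    linarith
end

section
/- Let K and L be positive integers and consider the integer quadratic polynomial q(X) = L(1 + K·L)·X² − (1 + K·L + 2K·L² + L − L²)·X + (K·L² + K·L + 1 − L²). Then q(1) = 0, and for every integer X ≥ 2 one has q(X) ≠ 0. -/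
/-- for positive integers `K, L`, the quadratic
`q(X) = L(1 + KL)X² − (1 + KL + 2KL² + L − L²)X + (KL² + KL + 1 − L²)`
has `q(1) = 0` and no integer root `X ≥ 2`. -/
theorem stmt3 (K L : ℤ) (hK : 0 < K) (hL : 0 < L)
    (q : ℤ → ℤ)
    (hq : ∀ X : ℤ, q X = L * (1 + K * L) * X ^ 2
        - (1 + K * L + 2 * K * L ^ 2 + L - L ^ 2) * X
        + (K * L ^ 2 + K * L + 1 - L ^ 2)) :
    q 1 = 0 ∧ ∀ X : ℤ, 2 ≤ X → q X ≠ 0 := by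
  have factor (X : ℤ) : q X =
      (X - 1) * (L * (1 + K * L) * X - (K * L ^ 2 + K * L + 1 - L ^ 2)) := by
    rw [hq]
    ring
  refine ⟨by simp [factor], fun X hX => ?_⟩
  rw [factor]
  have hlead : 0 ≤ L * (1 + K * L) * (X - 2) :=
    mul_nonneg (by positivity) (by linarith)
  have hKL : 0 ≤ K * L * (L - 1) := mul_nonneg (by positivity) (by linarith)
  exact (mul_pos (by linarith) (by nlinarith)).ne'
end

section
/- Let K, L, M be positive integers with M ≥ 2 and set (as integers) τ = K + K·L, ν = K·L·M, I₅ = K + L + M, I₄⁰ = K² − K + K·L² + K·L·M² + K²·L·M, a = 1 + τ + I₅ and b = (ν − τ)(I₅ + 2) − 2τ − I₄⁰. Then 2·a·K + b ≥ 0. -/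
/-- for positive integers `K, L, M` with `M ≥ 2`, and `τ, ν, I₅, I₄⁰, a, b`
as in equation (5.17), one has `2aK + b ≥ 0`, i.e. `K` is the larger root of the
quadratic `aX² + bX + c`. -/
theorem stmt7 (K L M : ℤ) (hK : 0 < K) (hL : 0 < L) (hM : 0 < M) (hM2 : 2 ≤ M)
    (τ ν I₅ I₄0 a b : ℤ)
    (hτ : τ = K + K * L) (hν : ν = K * L * M) (hI₅ : I₅ = K + L + M)
    (hI₄0 : I₄0 = K ^ 2 - K + K * L ^ 2 + K * L * M ^ 2 + K ^ 2 * L * M)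
    (ha : a = 1 + τ + I₅) (hb : b = (ν - τ) * (I₅ + 2) - 2 * τ - I₄0) :
    0 ≤ 2 * a * K + b := by
  have factored : 2 * a * K + b =
      K * (L ^ 2 * (M - 2) + L * (K + M - 3) + (2 * K + M - 1)) := by
    subst hb ha hI₄0 hI₅ hν hτ
    ring
  have hM_sub : 0 ≤ M - 2 := by lia
  have hKM_sub : 0 ≤ K + M - 3 := by lia
  have h_rest : 0 ≤ 2 * K + M - 1 := by lia
  rw [factored]
  positivity
end

section
/- Let K, L, M be positive integers with M ≥ 2 and set (as integers) τ = K + K·L, ν = K·L·M, I₅ = K + L + M, I₄⁰ = K² − K + K·L² + K·L·M² + K²·L·M, a = 1 + τ + I₅, b = (ν − τ)(I₅ + 2) − 2τ − I₄⁰ and c = τ(2τ − ν). Then b² − 4ac ≥ 0 and, as real numbers, K = (−b + √(b² − 4ac)) / (2a); moreover L = (τ − K)/K and M = ν/(τ − K). -/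
/-- Lemma 5.11, equations (5.14)-(5.16): for positive integers
`K, L, M` with `M ≥ 2` and `τ, ν, I₅, I₄⁰, a, b, c` as in the paper, one has
`b² − 4ac ≥ 0`, and as real numbers `K = (−b + √(b² − 4ac))/(2a)`,
`L = (τ − K)/K` and `M = ν/(τ − K)`. -/
theorem stmt9 (K L M : ℤ) (hK : 0 < K) (hL : 0 < L) (hM : 0 < M) (hM2 : 2 ≤ M)
    (τ ν I₅ I₄0 a b c : ℤ)
    (hτ : τ = K + K * L) (hν : ν = K * L * M) (hI₅ : I₅ = K + L + M)
    (hI₄0 : I₄0 = K ^ 2 - K + K * L ^ 2 + K * L * M ^ 2 + K ^ 2 * L * M)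
    (ha : a = 1 + τ + I₅) (hb : b = (ν - τ) * (I₅ + 2) - 2 * τ - I₄0)
    (hc : c = τ * (2 * τ - ν)) :
    0 ≤ b ^ 2 - 4 * a * c ∧
    (K : ℝ) = (-(b : ℝ) + Real.sqrt ((b : ℝ) ^ 2 - 4 * (a : ℝ) * (c : ℝ))) / (2 * (a : ℝ)) ∧
    (L : ℝ) = ((τ : ℝ) - (K : ℝ)) / (K : ℝ) ∧
    (M : ℝ) = (ν : ℝ) / ((τ : ℝ) - (K : ℝ)) := by
  have hroot : a * K ^ 2 + b * K + c = 0 := by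
    subst hc hb ha hI₄0 hI₅ hν hτ; ring
  have hdisc : b ^ 2 - 4 * a * c = (2 * a * K + b) ^ 2 := by
    linear_combination -4 * a * hroot
  have hvertex : 2 * a * K + b
      = K * (1 + 2 * K + L * (K - 1) + (M - 2) * (1 + L + L ^ 2)) := by
    subst hb ha hI₄0 hI₅ hν hτ; ring
  have hvertex_nonneg : 0 ≤ 2 * a * K + b := by
    have hK1 : 0 ≤ K - 1 := by lia
    have hM2' : 0 ≤ M - 2 := by lia
    rw [hvertex]
    positivity
  have ha_pos : 0 < a := by
    subst ha hI₅ hτ; positivity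
  have hKR : (K : ℝ) ≠ 0 := by exact_mod_cast hK.ne'
  have hLR : (L : ℝ) ≠ 0 := by exact_mod_cast hL.ne'
  have haR : (a : ℝ) ≠ 0 := by exact_mod_cast ha_pos.ne'
  have hτK : (τ : ℝ) - K = K * L := by
    subst hτ; push_cast; ring
  refine ⟨hdisc ▸ sq_nonneg _, ?_, ?_, ?_⟩
  · have hdiscR : (b : ℝ) ^ 2 - 4 * a * c = (2 * a * K + b) ^ 2 := by exact_mod_cast hdisc
    rw [hdiscR, Real.sqrt_sq (by exact_mod_cast hvertex_nonneg)]
    field_simp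
    ring
  · rw [hτK, mul_div_cancel_left₀ _ hKR]
  · rw [hτK, hν]
    push_cast
    rw [mul_div_cancel_left₀ _ (mul_ne_zero hKR hLR)]
end

section
/- Let K, L, M and K′, L′, M′ be positive integers. If K + K·L = K′ + K′·L′, K·L·M = K′·L′·M′, K + L + M = K′ + L′ + M′, and K² − K + K·L² + K·L·M² + K²·L·M = K′² − K′ + K′·L′² + K′·L′·M′² + K′²·L′·M′, then K = K′, L = L′ and M = M′. -/
theorem add_mul_le_mul_mul {a b c : ℕ} (hb : 0 < b) (hc : 2 ≤ c) :
    a + a * b ≤ a * b * c :=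
  calc a + a * b ≤ a * b + a * b := by gcongr; exact Nat.le_mul_of_pos_right a hb
    _ = a * b * 2 := by ring
    _ ≤ a * b * c := by gcongr

theorem lt_of_add_mul_eq {a b c d : ℕ} (hac : a < c) (h : a + a * b = c + c * d) :
    d < b := by
  by_contra! hbd
  have : a * b ≤ c * d := Nat.mul_le_mul hac.le hbd
  omega

/-- algebraic content of Theorem 5.11 / Corollary 5.13(b): the
invariants `τ = K + KL`, `ν = KLM`, `I₅ = K + L + M` and
`I₄⁰ = K² − K + KL² + KLM² + K²LM` determine the triple `(K, L, M)` of positive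
integers. -/
theorem stmt10 (K L M K' L' M' : ℕ)
    (hK : 0 < K) (hL : 0 < L) (hM : 0 < M)
    (hK' : 0 < K') (hL' : 0 < L') (hM' : 0 < M')
    (hτ : K + K * L = K' + K' * L')
    (hν : K * L * M = K' * L' * M')
    (hI₅ : K + L + M = K' + L' + M')
    (hI₄0 : K ^ 2 - K + K * L ^ 2 + K * L * M ^ 2 + K ^ 2 * L * M
          = K' ^ 2 - K' + K' * L' ^ 2 + K' * L' * M' ^ 2 + K' ^ 2 * L' * M') :
    K = K' ∧ L = L' ∧ M = M' := by
  have hsq : K ≤ K ^ 2 := Nat.le_self_pow two_ne_zero K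
  have hsq' : K' ≤ K' ^ 2 := Nat.le_self_pow two_ne_zero K'
  have hKK : K = K' := by
    by_cases hMM : M = 1 ∧ M' = 1
    · obtain ⟨rfl, rfl⟩ := hMM
      linarith
    have hle : K + K * L ≤ K * L * M := by
      by_cases h : M = 1
      · rw [hτ, hν]
        exact add_mul_le_mul_mul hL' (by omega)
      · exact add_mul_le_mul_mul hL (by omega)
    have hint : (K : ℤ) ^ 2 + (K + K * L - K * L * M) * L
        = K' ^ 2 + (K + K * L - K * L * M) * L' := by
      zify [hsq, hsq'] at hτ hν hI₅ hI₄0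
      linear_combination hI₄0 + (1 - L') * hτ - (K + L + M - L') * hν - K' * L' * M' * hI₅
    zify at hle
    rcases lt_trichotomy K K' with h | h | h
    · have hlt : L' < L := lt_of_add_mul_eq h hτ
      zify at h hlt
      nlinarith [mul_nonneg (sub_nonneg.2 hle) (sub_nonneg.2 hlt.le)]
    · exact h
    · have hlt : L < L' := lt_of_add_mul_eq h hτ.symm
      zify at h hlt
      nlinarith [mul_nonneg (sub_nonneg.2 hle) (sub_nonneg.2 hlt.le)]
  subst hKK
  have hLL : L = L' := Nat.eq_of_mul_eq_mul_left hK (by omega)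
  exact ⟨rfl, hLL, by omega⟩
end

section
/- Let K, L, M be positive integers and set (as integers) τ = K + K·L, ν = K·L·M, I₅ = K + L + M, I₄⁰ = K² − K + K·L² + K·L·M² + K²·L·M, a = 1 + τ + I₅, b = (ν − τ)(I₅ + 2) − 2τ − I₄⁰ and c = τ(2τ − ν). If (τ − ν)(I₅ − 1) = (τ − ν)² + ν, then M = 1, K = τ − ν and L·(τ − ν) = ν. If (τ − ν)(I₅ − 1) ≠ (τ − ν)² + ν, then M ≥ 2, b² − 4ac ≥ 0 and, as real numbers, K = (−b + √(b² − 4ac))/(2a), L = (τ − K)/K and M = ν/(τ − K). -/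
/-- Theorem 5.11/5.12: reconstruction of the out-degrees `K, L, M`
from the invariants `τ, ν, I₅, I₄⁰`.  If `(τ − ν)(I₅ − 1) = (τ − ν)² + ν` then
`M = 1`, `K = τ − ν` and `L(τ − ν) = ν`; otherwise `M ≥ 2`, `b² − 4ac ≥ 0` and,
as real numbers, `K = (−b + √(b² − 4ac))/(2a)`, `L = (τ − K)/K`, `M = ν/(τ − K)`. -/
theorem stmt11 (K L M : ℤ) (hK : 0 < K) (hL : 0 < L) (hM : 0 < M)
    (τ ν I₅ I₄0 a b c : ℤ)
    (hτ : τ = K + K * L) (hν : ν = K * L * M) (hI₅ : I₅ = K + L + M)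
    (hI₄0 : I₄0 = K ^ 2 - K + K * L ^ 2 + K * L * M ^ 2 + K ^ 2 * L * M)
    (ha : a = 1 + τ + I₅) (hb : b = (ν - τ) * (I₅ + 2) - 2 * τ - I₄0)
    (hc : c = τ * (2 * τ - ν)) :
    ((τ - ν) * (I₅ - 1) = (τ - ν) ^ 2 + ν →
      M = 1 ∧ K = τ - ν ∧ L * (τ - ν) = ν) ∧
    ((τ - ν) * (I₅ - 1) ≠ (τ - ν) ^ 2 + ν →
      2 ≤ M ∧ 0 ≤ b ^ 2 - 4 * a * c ∧
      (K : ℝ) = (-(b : ℝ) + Real.sqrt ((b : ℝ) ^ 2 - 4 * (a : ℝ) * (c : ℝ))) / (2 * (a : ℝ)) ∧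
      (L : ℝ) = ((τ : ℝ) - (K : ℝ)) / (K : ℝ) ∧
      (M : ℝ) = (ν : ℝ) / ((τ : ℝ) - (K : ℝ))) := by
  have root : a * K ^ 2 + b * K + c = 0 := by subst_vars; ring
  have slope : 2 * a * K + b =
      K * ((L ^ 2 + L) * (M - 2) + (K - 1) * (L + 2) + M + 1) := by subst_vars; ring
  have disc : b ^ 2 - 4 * a * c = (2 * a * K + b) ^ 2 := by
    linear_combination -4 * a * root
  have hνpos : 0 < ν := by rw [hν]; positivity
  have hapos : 0 < a := by rw [ha, hτ, hI₅]; positivity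
  refine ⟨fun h => ?_, fun h => ?_⟩
  · have hM1 : M = 1 := by
      by_contra hne
      have hM2 : 2 ≤ M := by omega
      have hdiff : τ - ν ≤ 0 := by
        have hLM : 1 ≤ L * (M - 1) := one_le_mul_of_one_le_of_one_le hL (by omega)
        have : τ - ν = K * (1 - L * (M - 1)) := by rw [hτ, hν]; ring
        rw [this]
        exact mul_nonpos_of_nonneg_of_nonpos hK.le (by linarith)
      have hI : 0 ≤ I₅ - 1 := by omega
      nlinarith [mul_nonpos_of_nonpos_of_nonneg hdiff hI, sq_nonneg (τ - ν)]
    subst hM1 hτ hν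
    exact ⟨rfl, by ring, by ring⟩
  · have hM2 : 2 ≤ M := by
      by_contra hlt
      obtain rfl : M = 1 := by omega
      exact h (by subst_vars; ring)
    have hslope : 0 ≤ 2 * a * K + b := by
      have h₁ : 0 ≤ (L ^ 2 + L) * (M - 2) := mul_nonneg (by positivity) (by omega)
      have h₂ : 0 ≤ (K - 1) * (L + 2) := mul_nonneg (by omega) (by omega)
      rw [slope]
      exact mul_nonneg hK.le (by omega)
    have hK' : (K : ℝ) ≠ 0 := by exact_mod_cast hK.ne'
    have hL' : (L : ℝ) ≠ 0 := by exact_mod_cast hL.ne'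
    have ha' : (a : ℝ) ≠ 0 := by exact_mod_cast hapos.ne'
    have hτK : (τ : ℝ) - K = K * L := by rw [hτ]; push_cast; ring
    refine ⟨hM2, disc ▸ sq_nonneg _, ?_, ?_, ?_⟩
    · have disc' : (b : ℝ) ^ 2 - 4 * a * c = (2 * a * K + b) ^ 2 := by exact_mod_cast disc
      rw [disc', Real.sqrt_sq (by exact_mod_cast hslope)]
      field_simp
      ring
    · rw [hτK]
      field_simp
    · rw [hτK, hν]
      push_cast
      field_simp
end

section
/- Let K be a positive integer and let L, M, L′, M′ be positive integers. For positive integers x, y set I₉(x, y) = K(K² + 3Kx + 2Ky + 7xy + 2x² + 2y²) + x(x² + 3xy + 2y²) + y³ and I₁₀(x, y) = K² + x² + y² + 3Kx + 3xy + 3Ky. If L + M = L′ + M′, I₉(L, M) = I₉(L′, M′) and I₁₀(L, M) = I₁₀(L′, M′), then L = L′ and M = M′. -/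
/-- algebraic content of Theorem 5.6: with the root out-degree `K`
fixed, the invariants `I₅ = K + L + M`,
`I₉ = K(K² + 3KL + 2KM + 7LM + 2L² + 2M²) + L(L² + 3LM + 2M²) + M³` and
`I₁₀ = K² + L² + M² + 3KL + 3LM + 3KM` determine the pair `(L, M)` of positive
integers. -/
theorem stmt12 (K L M L' M' : ℕ)
    (hK : 0 < K) (hL : 0 < L) (hM : 0 < M) (hL' : 0 < L') (hM' : 0 < M')
    (I₉ I₁₀ : ℕ → ℕ → ℕ)
    (hI₉ : ∀ x y : ℕ, I₉ x y =
      K * (K ^ 2 + 3 * K * x + 2 * K * y + 7 * x * y + 2 * x ^ 2 + 2 * y ^ 2)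
        + x * (x ^ 2 + 3 * x * y + 2 * y ^ 2) + y ^ 3)
    (hI₁₀ : ∀ x y : ℕ, I₁₀ x y =
      K ^ 2 + x ^ 2 + y ^ 2 + 3 * K * x + 3 * x * y + 3 * K * y)
    (h5 : L + M = L' + M')
    (h9 : I₉ L M = I₉ L' M')
    (h10 : I₁₀ L M = I₁₀ L' M') :
    L = L' ∧ M = M' := by
  rw [hI₉, hI₉] at h9
  rw [hI₁₀, hI₁₀] at h10
  zify at h5 h9 h10 hK hL hM ⊢
  have hprod : (L : ℤ) * M = L' * M' := by
    linear_combination h10 - (L + M + L' + M' + 3 * K : ℤ) * h5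
  have hroot : ((L : ℤ) - L') * (L - M') = 0 := by
    linear_combination (L : ℤ) * h5 - hprod
  rcases mul_eq_zero.mp hroot with h | h
  · constructor <;> linarith
  · have hLM' : (M' : ℤ) = L := by linarith
    have hML' : (L' : ℤ) = M := by linarith
    rw [hLM', hML'] at h9 ⊢
    have hswap : ((L : ℤ) - M) * (K ^ 2 + L * M) = 0 := by linear_combination h9
    have hpos : (K : ℤ) ^ 2 + L * M ≠ 0 := by positivity
    have hLM := (mul_eq_zero.mp hswap).resolve_right hpos
    constructor <;> linarith
end
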